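/- In 2D, the ECC continuum part admits the effective-area form: ∑_{b∈B, b⊂Ω_c} c_b(y) = ∑_{T∈T} ∑_{r∈R} Ω_{T,r} φ(D_r y|_T), where Ω_{T,r} := |T| − ∑_{(i,i+r)∈B, (i,i+r)⊄Ω_c} ⨍_{(i,i+r)} χ_T db; consequently E^ecc(y) = ∑_{b∈B, b⊄Ω_c} e_b(y) + ∑_{T∈T} ∑_{r∈R} Ω_{T,r} φ(D_r y|_T). -/

import Mathlib

open MeasureTheory Filter
open scoped Classical

/-- Embedding of the lattice `ℤ²` into `ℝ²`. -/
noncomputable def c2 (i : ℤ × ℤ) : ℝ × ℝ := ((i.1 : ℝ), (i.2 : ℝ))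

/-- The closed triangle with vertices at the lattice points of `T`. -/
noncomputable def tri (T : (ℤ × ℤ) × (ℤ × ℤ) × (ℤ × ℤ)) : Set (ℝ × ℝ) :=
  convexHull ℝ {c2 T.1, c2 T.2.1, c2 T.2.2}

/-- The density ("angular characteristic") function
`χ_A(x) = lim_{ρ→0} |A ∩ B_ρ(x)|/|B_ρ(x)|`. -/
noncomputable def dens (A : Set (ℝ × ℝ)) (x : ℝ × ℝ) : ℝ :=
  limUnder (nhdsWithin 0 (Set.Ioi (0:ℝ)))
    fun ρ : ℝ => (volume (A ∩ Metric.ball x ρ)).toReal / (volume (Metric.ball x ρ)).toReal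

/-- One-sided directional derivative `D_r y (x)` of a vector-valued function. -/
noncomputable def Dr (r : ℝ × ℝ) (y : ℝ × ℝ → ℝ × ℝ) (x : ℝ × ℝ) : ℝ × ℝ :=
  derivWithin (fun s : ℝ => y (x + s • r)) (Set.Ioi (0 : ℝ)) 0

lemma tri_convex (T : (ℤ × ℤ) × (ℤ × ℤ) × (ℤ × ℤ)) : Convex ℝ (tri T) := convex_convexHull _ _

lemma tri_isCompact (T : (ℤ × ℤ) × (ℤ × ℤ) × (ℤ × ℤ)) : IsCompact (tri T) :=
  Set.Finite.isCompact_convexHull ℝ (Set.toFinite _)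

lemma tri_isClosed (T : (ℤ × ℤ) × (ℤ × ℤ) × (ℤ × ℤ)) : IsClosed (tri T) :=
  (tri_isCompact T).isClosed

/-- The averaged volume fraction of `A` in the ball of radius `ρ` around `x`. -/
noncomputable def volFrac (A : Set (ℝ × ℝ)) (x : ℝ × ℝ) (ρ : ℝ) : ℝ :=
  (volume (A ∩ Metric.ball x ρ)).toReal / (volume (Metric.ball x ρ)).toReal

lemma volume_inter_ball_ne_top (A : Set (ℝ × ℝ)) (x : ℝ × ℝ) (ρ : ℝ) :
    volume (A ∩ Metric.ball x ρ) ≠ ⊤ :=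
  measure_ne_top_of_subset Set.inter_subset_right measure_ball_lt_top.ne

lemma volFrac_nonneg (A : Set (ℝ × ℝ)) (x : ℝ × ℝ) (ρ : ℝ) : 0 ≤ volFrac A x ρ := by
  unfold volFrac; positivity

lemma volFrac_le_one (A : Set (ℝ × ℝ)) (x : ℝ × ℝ) (ρ : ℝ) : volFrac A x ρ ≤ 1 :=
  div_le_one_of_le₀ (ENNReal.toReal_mono measure_ball_lt_top.ne
    (measure_mono Set.inter_subset_right)) ENNReal.toReal_nonneg

lemma dens_eq_of_tendsto {A : Set (ℝ × ℝ)} {x : ℝ × ℝ} {a : ℝ}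
    (h : Tendsto (volFrac A x) (nhdsWithin 0 (Set.Ioi 0)) (nhds a)) : dens A x = a :=
  h.limUnder_eq

lemma volFrac_antitoneOn {A : Set (ℝ × ℝ)} (hA : Convex ℝ A) {x : ℝ × ℝ} (hx : x ∈ A) :
    AntitoneOn (volFrac A x) (Set.Ioi 0) := by
  intro ρ hρ σ hσ hρσ
  rw [Set.mem_Ioi] at hρ hσ
  set k : ℝ := ρ / σ with hk
  have hk0 : 0 < k := div_pos hρ hσ
  have hk1 : k ≤ 1 := (div_le_one hσ).2 hρσ
  have hsub : AffineMap.homothety x k '' (A ∩ Metric.ball x σ) ⊆ A ∩ Metric.ball x ρ := by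
    rintro _ ⟨z, ⟨hzA, hzB⟩, rfl⟩
    refine ⟨?_, ?_⟩
    · rw [AffineMap.homothety_eq_lineMap]
      exact hA.lineMap_mem hx hzA ⟨hk0.le, hk1⟩
    · rw [Metric.mem_ball] at hzB ⊢
      rw [dist_homothety_center, Real.norm_of_nonneg hk0.le, dist_comm]
      calc k * dist z x < k * σ := by gcongr
        _ = ρ := by rw [hk]; field_simp
  have h1 := measure_mono (μ := volume) hsub
  rw [Measure.addHaar_image_homothety] at h1
  have h2 := ENNReal.toReal_mono (volume_inter_ball_ne_top A x ρ) h1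
  rw [ENNReal.toReal_mul, ENNReal.toReal_ofReal (abs_nonneg _)] at h2
  have h3 : (volume (Metric.ball x ρ)).toReal
      = |k ^ Module.finrank ℝ (ℝ × ℝ)| * (volume (Metric.ball x σ)).toReal := by
    have := Measure.addHaar_ball_mul_of_pos (volume : Measure (ℝ × ℝ)) x hk0 σ
    have h4 := Measure.addHaar_ball_center (volume : Measure (ℝ × ℝ)) x σ
    rw [show k * σ = ρ by rw [hk]; field_simp, ← h4] at this
    rw [this, ENNReal.toReal_mul, ENNReal.toReal_ofReal (by positivity),
      abs_of_nonneg (by positivity)]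
  have hpos : 0 < (volume (Metric.ball x σ)).toReal :=
    ENNReal.toReal_pos (Metric.measure_ball_pos _ _ hσ).ne' measure_ball_lt_top.ne
  have hpk : 0 < |k ^ Module.finrank ℝ (ℝ × ℝ)| := by positivity
  unfold volFrac
  rw [h3, div_le_div_iff₀ hpos (by positivity)]
  nlinarith

lemma volFrac_tendsto_of_notMem {A : Set (ℝ × ℝ)} (hA : IsClosed A) {x : ℝ × ℝ} (hx : x ∉ A) :
    Tendsto (volFrac A x) (nhdsWithin 0 (Set.Ioi 0)) (nhds 0) := by
  obtain ⟨ε, hε, h⟩ := Metric.isOpen_iff.1 hA.isOpen_compl x hx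
  refine tendsto_const_nhds.congr' ?_
  filter_upwards [Ioo_mem_nhdsGT hε] with ρ hρ
  have : A ∩ Metric.ball x ρ = ∅ := by
    ext z
    simp only [Set.mem_inter_iff, Set.mem_empty_iff_false, iff_false, not_and]
    exact fun hz hzb => h (Metric.ball_subset_ball hρ.2.le hzb) hz
  simp [volFrac, this]

lemma dens_eq_zero_of_notMem {A : Set (ℝ × ℝ)} (hA : IsClosed A) {x : ℝ × ℝ} (hx : x ∉ A) :
    dens A x = 0 :=
  dens_eq_of_tendsto (volFrac_tendsto_of_notMem hA hx)

lemma volFrac_tendsto_dens {A : Set (ℝ × ℝ)} (hA : IsClosed A) (hc : Convex ℝ A) (x : ℝ × ℝ) :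
    Tendsto (volFrac A x) (nhdsWithin 0 (Set.Ioi 0)) (nhds (dens A x)) := by
  by_cases hx : x ∈ A
  · have h := (volFrac_antitoneOn hc hx).tendsto_nhdsGT (α := ℝ)
      ⟨1, by rintro _ ⟨ρ, -, rfl⟩; exact volFrac_le_one A x ρ⟩
    rw [dens_eq_of_tendsto h]
    exact h
  · rw [dens_eq_zero_of_notMem hA hx]
    exact volFrac_tendsto_of_notMem hA hx

lemma dens_mem_Icc {A : Set (ℝ × ℝ)} (hA : IsClosed A) (hc : Convex ℝ A) (x : ℝ × ℝ) :
    dens A x ∈ Set.Icc (0 : ℝ) 1 :=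
  isClosed_Icc.mem_of_tendsto (volFrac_tendsto_dens hA hc x)
    (Eventually.of_forall fun ρ => ⟨volFrac_nonneg A x ρ, volFrac_le_one A x ρ⟩)

lemma measurable_volFrac {A : Set (ℝ × ℝ)} (hA : MeasurableSet A) (ρ : ℝ) :
    Measurable fun x => volFrac A x ρ := by
  have key : ∀ A : Set (ℝ × ℝ), MeasurableSet A →
      Measurable fun x => (volume (A ∩ Metric.ball x ρ)).toReal := by
    intro A hA
    have hs : MeasurableSet {p : (ℝ × ℝ) × (ℝ × ℝ) | p.2 ∈ A ∧ dist p.2 p.1 < ρ} :=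
      (measurable_snd hA).inter
        (measurableSet_lt (measurable_snd.dist measurable_fst) measurable_const)
    exact (measurable_measure_prodMk_left hs).ennreal_toReal
  have h := key Set.univ MeasurableSet.univ
  simp only [Set.univ_inter] at h
  exact (key A hA).div h

lemma measurable_dens {A : Set (ℝ × ℝ)} (hA : IsClosed A) (hc : Convex ℝ A) :
    Measurable (dens A) := by
  have hu : Tendsto (fun n : ℕ => 1 / ((n : ℝ) + 1)) atTop (nhdsWithin 0 (Set.Ioi 0)) :=
    tendsto_nhdsWithin_iff.2 ⟨tendsto_one_div_add_atTop_nhds_zero_nat,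
      Eventually.of_forall fun n => by simp only [Set.mem_Ioi]; positivity⟩
  refine measurable_of_tendsto_metrizable
    (fun n : ℕ => measurable_volFrac hA.measurableSet (1 / ((n : ℝ) + 1))) ?_
  rw [tendsto_pi_nhds]
  exact fun x => (volFrac_tendsto_dens hA hc x).comp hu

lemma intervalIntegrable_dens {A : Set (ℝ × ℝ)} (hA : IsClosed A) (hc : Convex ℝ A)
    (p r : ℝ × ℝ) (s t : ℝ) :
    IntervalIntegrable (fun l : ℝ => dens A (p + l • r)) volume s t := by
  have hm : Measurable fun l : ℝ => dens A (p + l • r) :=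
    (measurable_dens hA hc).comp (by fun_prop)
  refine (intervalIntegrable_const (c := (1 : ℝ))).mono_fun' hm.aestronglyMeasurable ?_
  refine Eventually.of_forall fun l => ?_
  have := dens_mem_Icc hA hc (p + l • r)
  simp only [Real.norm_eq_abs, abs_of_nonneg this.1]
  exact this.2

lemma dens_biUnion {ι : Type*} (s : Finset ι) (A : ι → Set (ℝ × ℝ))
    (hA : ∀ i ∈ s, IsClosed (A i)) (hc : ∀ i ∈ s, Convex ℝ (A i))
    (hd : ∀ i ∈ s, ∀ j ∈ s, i ≠ j → interior (A i) ∩ interior (A j) = ∅) (x : ℝ × ℝ) :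
    dens (⋃ i ∈ s, A i) x = ∑ i ∈ s, dens (A i) x := by
  refine dens_eq_of_tendsto ?_
  refine (tendsto_finsetSum s fun i hi => volFrac_tendsto_dens (hA i hi) (hc i hi) x).congr ?_
  intro ρ
  have hae : ∀ i ∈ s, (interior (A i) : Set (ℝ × ℝ)) =ᵐ[volume] A i := fun i hi =>
    interior_ae_eq_of_null_frontier ((hc i hi).addHaar_frontier volume)
  unfold volFrac
  rw [← Finset.sum_div, Set.iUnion₂_inter, measure_biUnion_finset₀,
    ENNReal.toReal_sum fun i _ => volume_inter_ball_ne_top _ _ _]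
  · intro i hi j hj hij
    refine AEDisjoint.mono (s := A i) (t := A j) ?_ Set.inter_subset_left Set.inter_subset_left
    refine AEDisjoint.congr ?_ (hae i hi).symm (hae j hj).symm
    exact (Set.disjoint_iff_inter_eq_empty.2 (hd i hi j hj hij)).aedisjoint
  · exact fun i hi => ((hA i hi).measurableSet.inter measurableSet_ball).nullMeasurableSet

lemma c2_add (i j : ℤ × ℤ) : c2 (i + j) = c2 i + c2 j := by simp [c2]

lemma c2_sub (i j : ℤ × ℤ) : c2 (i - j) = c2 i - c2 j := by simp [c2]

/-- Coordinates with respect to the edge vectors of a nondegenerate lattice triangle. -/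
lemma exists_edge_coords {T : (ℤ × ℤ) × (ℤ × ℤ) × (ℤ × ℤ)}
    (h : AffineIndependent ℝ ![c2 T.1, c2 T.2.1, c2 T.2.2]) :
    ∃ f g : (ℝ × ℝ) →L[ℝ] ℝ, f (c2 (T.2.1 - T.1)) = 1 ∧ f (c2 (T.2.2 - T.1)) = 0 ∧
      g (c2 (T.2.1 - T.1)) = 0 ∧ g (c2 (T.2.2 - T.1)) = 1 ∧
      ∀ x, x = f x • c2 (T.2.1 - T.1) + g x • c2 (T.2.2 - T.1) := by
  obtain ⟨⟨a1, a2⟩, ⟨b1, b2⟩, ⟨e1, e2⟩⟩ := T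
  set d : ℝ := ((b1 : ℝ) - a1) * (e2 - a2) - (b2 - a2) * (e1 - a1) with hd
  have hd0 : d ≠ 0 := by
    intro h0
    rw [affineIndependent_iff_not_collinear_set] at h
    apply h
    by_cases hu : c2 (b1, b2) = c2 (a1, a2)
    · rw [hu]
      simpa using collinear_pair ℝ (c2 (a1, a2)) (c2 (e1, e2))
    rw [collinear_iff_of_mem (p₀ := c2 (a1, a2)) (by simp)]
    refine ⟨c2 (b1, b2) - c2 (a1, a2), ?_⟩
    simp only [c2, Prod.mk.injEq, not_and_or] at hu
    intro p hp
    simp only [Set.mem_insert_iff, Set.mem_singleton_iff] at hp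
    rcases hp with rfl | rfl | rfl
    · exact ⟨0, by simp⟩
    · exact ⟨1, by simp⟩
    · rcases hu with hu | hu
      · have hu' : (b1 : ℝ) - a1 ≠ 0 := sub_ne_zero.2 hu
        refine ⟨(e1 - a1) / (b1 - a1), ?_⟩
        ext <;> simp [c2] <;> field_simp
        · ring
        · linarith
      · have hu' : (b2 : ℝ) - a2 ≠ 0 := sub_ne_zero.2 hu
        refine ⟨(e2 - a2) / (b2 - a2), ?_⟩
        ext <;> simp [c2] <;> field_simp
        · linarith
        · ring
  refine ⟨d⁻¹ • (((e2 : ℝ) - a2) • ContinuousLinearMap.fst ℝ ℝ ℝ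
      - ((e1 : ℝ) - a1) • ContinuousLinearMap.snd ℝ ℝ ℝ),
    d⁻¹ • (((b1 : ℝ) - a1) • ContinuousLinearMap.snd ℝ ℝ ℝ
      - ((b2 : ℝ) - a2) • ContinuousLinearMap.fst ℝ ℝ ℝ), ?_, ?_, ?_, ?_, ?_⟩
  · simp [c2]; field_simp; rw [hd]; ring
  · simp [c2]; right; ring
  · simp [c2]; right; ring
  · simp [c2]; field_simp; rw [hd]
  · intro x
    ext <;> simp [c2] <;> field_simp <;> rw [hd] <;> ring

lemma tri_eq_setOf {T : (ℤ × ℤ) × (ℤ × ℤ) × (ℤ × ℤ)} {f g : (ℝ × ℝ) →L[ℝ] ℝ}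
    (hfu : f (c2 (T.2.1 - T.1)) = 1) (hfv : f (c2 (T.2.2 - T.1)) = 0)
    (hgu : g (c2 (T.2.1 - T.1)) = 0) (hgv : g (c2 (T.2.2 - T.1)) = 1)
    (hx : ∀ x, x = f x • c2 (T.2.1 - T.1) + g x • c2 (T.2.2 - T.1)) :
    tri T = {x | 0 ≤ f (x - c2 T.1) ∧ 0 ≤ g (x - c2 T.1) ∧
      f (x - c2 T.1) + g (x - c2 T.1) ≤ 1} := by
  rw [c2_sub] at hfu hfv hgu hgv
  simp only [c2_sub] at hx
  apply Set.Subset.antisymm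
  · refine convexHull_min ?_ ?_
    · rintro p (rfl | rfl | rfl)
      · simp
      · simp [hfu, hgu, -map_sub]
      · simp [hfv, hgv, -map_sub]
    · have e : {x | 0 ≤ f (x - c2 T.1) ∧ 0 ≤ g (x - c2 T.1) ∧
          f (x - c2 T.1) + g (x - c2 T.1) ≤ 1} =
          {x | f (c2 T.1) ≤ f x} ∩ ({x | g (c2 T.1) ≤ g x} ∩
            {x | (f + g) x ≤ 1 + f (c2 T.1) + g (c2 T.1)}) := by
        ext x
        simp only [Set.mem_ofPred_eq, Set.mem_inter_iff, map_sub, sub_nonneg, add_apply]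
        refine and_congr_right fun _ => and_congr_right fun _ => ?_
        constructor <;> intro h <;> linarith
      rw [e]
      exact (convex_halfSpace_ge f.isLinear _).inter
        ((convex_halfSpace_ge g.isLinear _).inter (convex_halfSpace_le (f + g).isLinear _))
  · rintro x ⟨h1, h2, h3⟩
    have hxe : x = (1 - f (x - c2 T.1) - g (x - c2 T.1)) • c2 T.1
        + f (x - c2 T.1) • c2 T.2.1 + g (x - c2 T.1) • c2 T.2.2 := by
      have := hx (x - c2 T.1)
      set s := f (x - c2 T.1)
      set t := g (x - c2 T.1)
      rw [sub_eq_iff_eq_add] at this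
      rw [this]
      module
    rw [hxe]
    have hc := tri_convex T
    have hm : ∀ i : Fin 3, ![c2 T.1, c2 T.2.1, c2 T.2.2] i ∈ tri T := by
      intro i
      apply subset_convexHull
      fin_cases i <;> simp
    have := hc.sum_mem (t := Finset.univ) (w := ![1 - f (x - c2 T.1) - g (x - c2 T.1),
      f (x - c2 T.1), g (x - c2 T.1)]) (z := ![c2 T.1, c2 T.2.1, c2 T.2.2])
      (by intro i _; fin_cases i
          · simp only [Fin.zero_eta, Matrix.cons_val_zero]; linarith
          · exact h1
          · exact h2)
      (by simp only [Fin.sum_univ_three, Matrix.cons_val]; ring) (fun i _ => hm i)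
    simpa [Fin.sum_univ_three, -map_sub] using this

/-- The number of lattice translates of `w` lying in `A`. -/
noncomputable def latticeCount (A : Set (ℝ × ℝ)) (w : ℝ × ℝ) : ENNReal :=
  ∑' i : ℤ × ℤ, A.indicator 1 (w + c2 i)

lemma latticeCount_eq_tsum_one (A : Set (ℝ × ℝ)) (w : ℝ × ℝ) :
    latticeCount A w = ∑' _ : {i : ℤ × ℤ | w + c2 i ∈ A}, (1 : ENNReal) := by
  rw [tsum_subtype {i : ℤ × ℤ | w + c2 i ∈ A} (fun _ => (1 : ENNReal))]
  rfl

/-- A half-open lattice parallelogram contains the same number of points of every translate of the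
lattice. -/
lemma latticeCount_parallelogram_const {u v : ℤ × ℤ} {f g : (ℝ × ℝ) →L[ℝ] ℝ}
    (hfu : f (c2 u) = 1) (hfv : f (c2 v) = 0) (hgu : g (c2 u) = 0) (hgv : g (c2 v) = 1)
    (a w w' : ℝ × ℝ) :
    latticeCount {x | ⌊f (x - a)⌋ = 0 ∧ ⌊g (x - a)⌋ = 0} w =
      latticeCount {x | ⌊f (x - a)⌋ = 0 ∧ ⌊g (x - a)⌋ = 0} w' := by
  let lam : ℝ × ℝ → ℤ × ℤ := fun x => ⌊f (x - a)⌋ • u + ⌊g (x - a)⌋ • v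
  have hc2 : ∀ m n : ℤ, c2 (m • u + n • v) = (m : ℝ) • c2 u + (n : ℝ) • c2 v := by
    intro m n
    simp [c2]
  have hf : ∀ x (m n : ℤ), ⌊f (x - c2 (m • u + n • v) - a)⌋ = ⌊f (x - a)⌋ - m := by
    intro x m n
    rw [hc2, sub_right_comm, map_sub, map_add, map_smul, map_smul, hfu, hfv]
    simp [-map_sub]
  have hg : ∀ x (m n : ℤ), ⌊g (x - c2 (m • u + n • v) - a)⌋ = ⌊g (x - a)⌋ - n := by
    intro x m n
    rw [hc2, sub_right_comm, map_sub, map_add, map_smul, map_smul, hgu, hgv]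
    simp [-map_sub]
  have hmem : ∀ (z : ℝ × ℝ) (i : ℤ × ℤ),
      z + c2 (i - lam (z + c2 i)) ∈ {x | ⌊f (x - a)⌋ = 0 ∧ ⌊g (x - a)⌋ = 0} := by
    intro z i
    rw [c2_sub, ← add_sub_assoc]
    exact ⟨by rw [hf, sub_self], by rw [hg, sub_self]⟩
  have hinv : ∀ (z z' : ℝ × ℝ) (i : ℤ × ℤ),
      z + c2 i ∈ {x | ⌊f (x - a)⌋ = 0 ∧ ⌊g (x - a)⌋ = 0} →
      (i - lam (z' + c2 i)) - lam (z + c2 (i - lam (z' + c2 i))) = i := by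
    rintro z z' i ⟨h1, h2⟩
    have : lam (z + c2 (i - lam (z' + c2 i))) = - lam (z' + c2 i) := by
      rw [c2_sub, ← add_sub_assoc]
      simp only [lam]
      rw [hf, hg, h1, h2]
      module
    rw [this]
    abel
  let e : {i : ℤ × ℤ | w + c2 i ∈ {x | ⌊f (x - a)⌋ = 0 ∧ ⌊g (x - a)⌋ = 0}} ≃
      {i : ℤ × ℤ | w' + c2 i ∈ {x | ⌊f (x - a)⌋ = 0 ∧ ⌊g (x - a)⌋ = 0}} :=
    { toFun := fun i => ⟨i - lam (w' + c2 i), hmem w' i⟩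
      invFun := fun i => ⟨i - lam (w + c2 i), hmem w i⟩
      left_inv := fun i => Subtype.ext (hinv w w' i i.2)
      right_inv := fun i => Subtype.ext (hinv w' w i i.2) }
  rw [latticeCount_eq_tsum_one, latticeCount_eq_tsum_one]
  exact e.tsum_eq (fun _ => (1 : ENNReal))

lemma setLIntegral_latticeCount {A V : Set (ℝ × ℝ)} (hA : MeasurableSet A) :
    ∫⁻ w in V, latticeCount A w = ∑' i : ℤ × ℤ, volume ((fun w => w + c2 i) ⁻¹' A ∩ V) := by
  unfold latticeCount
  rw [lintegral_tsum]
  · refine tsum_congr fun i => ?_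
    have hm : MeasurableSet ((fun w => w + c2 i) ⁻¹' A) := (measurable_add_const _) hA
    rw [← Measure.restrict_apply hm, ← lintegral_indicator_one hm]
    rfl
  · intro i
    exact ((measurable_one.indicator hA).comp (measurable_add_const _)).aemeasurable

lemma volume_preimage_add_inter (A V : Set (ℝ × ℝ)) (c : ℝ × ℝ) :
    volume ((fun w => w + c) ⁻¹' A ∩ V) = volume (A ∩ (fun w => w - c) ⁻¹' V) := by
  rw [← measure_preimage_add_right volume c (A ∩ (fun w => w - c) ⁻¹' V)]
  congr 1
  ext w
  simp

/-- Integrating the lattice count over the unit cell gives the volume. -/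
lemma setLIntegral_latticeCount_unit {A : Set (ℝ × ℝ)} (hA : MeasurableSet A) :
    ∫⁻ w in (Set.Ico (0:ℝ) 1 ×ˢ Set.Ico (0:ℝ) 1), latticeCount A w = volume A := by
  rw [setLIntegral_latticeCount hA]
  have hfl : Measurable fun w : ℝ × ℝ => (⌊w.1⌋, ⌊w.2⌋) :=
    (Int.measurable_floor.comp measurable_fst).prodMk (Int.measurable_floor.comp measurable_snd)
  have h := tsum_measure_preimage_singleton (μ := volume.restrict A)
    (s := (Set.univ : Set (ℤ × ℤ))) Set.countable_univ
    (f := fun w : ℝ × ℝ => (⌊w.1⌋, ⌊w.2⌋)) (fun y _ => hfl (measurableSet_singleton y))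
  rw [Set.preimage_univ, Measure.restrict_apply_univ] at h
  rw [← h, tsum_univ fun i : ℤ × ℤ =>
    (volume.restrict A) ((fun w : ℝ × ℝ => (⌊w.1⌋, ⌊w.2⌋)) ⁻¹' {i})]
  refine tsum_congr fun i => ?_
  rw [volume_preimage_add_inter, Measure.restrict_apply (hfl (measurableSet_singleton i)),
    Set.inter_comm]
  congr 2
  ext w
  simp only [c2, Set.mem_preimage, Set.mem_prod, Set.mem_Ico, Prod.fst_sub, Prod.snd_sub,
    Set.mem_singleton_iff, Prod.ext_iff, Int.floor_eq_iff]
  constructor <;> rintro ⟨⟨_, _⟩, _, _⟩ <;> refine ⟨⟨?_, ?_⟩, ?_, ?_⟩ <;> linarith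

lemma volume_setOf_eq_const {f : (ℝ × ℝ) →L[ℝ] ℝ} (hf : f ≠ 0) (c : ℝ) :
    volume {x | f x = c} = 0 := by
  by_cases h : ∃ p, f p = c
  · obtain ⟨p, rfl⟩ := h
    have hker : LinearMap.ker (f : (ℝ × ℝ) →ₗ[ℝ] ℝ) ≠ ⊤ := by
      intro h0
      rw [LinearMap.ker_eq_top] at h0
      exact hf (ContinuousLinearMap.coe_inj.1 h0)
    have := Measure.addHaar_submodule (volume : Measure (ℝ × ℝ)) _ hker
    rw [← measure_preimage_add_right volume (-p)] at this
    convert! this using 2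
    ext x
    simp [← sub_eq_add_neg, sub_eq_zero]
  · push Not at h
    convert measure_empty (μ := (volume : Measure (ℝ × ℝ)))
    ext x
    simpa using h x

lemma indicator_tri_add_indicator_reflection {T : (ℤ × ℤ) × (ℤ × ℤ) × (ℤ × ℤ)}
    {f g : (ℝ × ℝ) →L[ℝ] ℝ}
    (hfu : f (c2 (T.2.1 - T.1)) = 1) (hfv : f (c2 (T.2.2 - T.1)) = 0)
    (hgu : g (c2 (T.2.1 - T.1)) = 0) (hgv : g (c2 (T.2.2 - T.1)) = 1)
    (hx : ∀ x, x = f x • c2 (T.2.1 - T.1) + g x • c2 (T.2.2 - T.1)) {x : ℝ × ℝ}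
    (h1 : f x ≠ 1 + f (c2 T.1)) (h2 : g x ≠ 1 + g (c2 T.1))
    (h3 : (f + g) x ≠ 1 + (f + g) (c2 T.1)) :
    (tri T).indicator (1 : ℝ × ℝ → ENNReal) x
        + ((fun x => c2 (T.2.1 + T.2.2) - x) ⁻¹' tri T).indicator 1 x =
      {x | ⌊f (x - c2 T.1)⌋ = 0 ∧ ⌊g (x - c2 T.1)⌋ = 0}.indicator 1 x := by
  have hT : x ∈ tri T ↔ 0 ≤ f x - f (c2 T.1) ∧ 0 ≤ g x - g (c2 T.1) ∧
      (f x - f (c2 T.1)) + (g x - g (c2 T.1)) ≤ 1 := by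
    rw [tri_eq_setOf hfu hfv hgu hgv hx]
    simp [-sub_nonneg]
  have hT' : x ∈ (fun x => c2 (T.2.1 + T.2.2) - x) ⁻¹' tri T ↔ f x - f (c2 T.1) ≤ 1 ∧
      g x - g (c2 T.1) ≤ 1 ∧ 1 ≤ (f x - f (c2 T.1)) + (g x - g (c2 T.1)) := by
    rw [tri_eq_setOf hfu hfv hgu hgv hx]
    rw [c2_sub, map_sub] at hfu hfv hgu hgv
    simp only [Set.mem_preimage, Set.mem_ofPred_eq, map_sub, c2_add, map_add]
    constructor <;> rintro ⟨_, _, _⟩ <;> refine ⟨?_, ?_, ?_⟩ <;> linarith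
  have hD : x ∈ {x | ⌊f (x - c2 T.1)⌋ = 0 ∧ ⌊g (x - c2 T.1)⌋ = 0} ↔
      (0 ≤ f x - f (c2 T.1) ∧ f x - f (c2 T.1) < 1) ∧
        (0 ≤ g x - g (c2 T.1) ∧ g x - g (c2 T.1) < 1) := by
    simp only [Set.mem_ofPred_eq, Int.floor_eq_zero_iff, Set.mem_Ico, map_sub]
  simp only [add_apply] at h3
  have h1' : f x - f (c2 T.1) ≠ 1 := fun h => h1 (by linarith)
  have h2' : g x - g (c2 T.1) ≠ 1 := fun h => h2 (by linarith)
  have h3' : (f x - f (c2 T.1)) + (g x - g (c2 T.1)) ≠ 1 := fun h => h3 (by linarith)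
  clear h1 h2 h3
  generalize f x - f (c2 T.1) = s at *
  generalize g x - g (c2 T.1) = t at *
  simp only [Set.indicator_apply, Pi.one_apply]
  by_cases a : x ∈ tri T
  · obtain ⟨a1, a2, a3⟩ := hT.1 a
    have a3' := lt_of_le_of_ne a3 h3'
    have b : x ∉ (fun x => c2 (T.2.1 + T.2.2) - x) ⁻¹' tri T := fun h => by
      have := (hT'.1 h).2.2; linarith
    rw [if_pos a, if_neg b, if_pos (hD.2 ⟨⟨a1, by linarith⟩, a2, by linarith⟩), add_zero]
  · by_cases b : x ∈ (fun x => c2 (T.2.1 + T.2.2) - x) ⁻¹' tri T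
    · obtain ⟨b1, b2, b3⟩ := hT'.1 b
      rw [if_neg a, if_pos b, if_pos (hD.2 ⟨⟨by linarith, lt_of_le_of_ne b1 h1'⟩, by linarith,
        lt_of_le_of_ne b2 h2'⟩), zero_add]
    · have c : x ∉ {x | ⌊f (x - c2 T.1)⌋ = 0 ∧ ⌊g (x - c2 T.1)⌋ = 0} := by
        intro h
        obtain ⟨⟨c1, c2'⟩, c3, c4⟩ := hD.1 h
        rcases le_total (s + t) 1 with h | h
        · exact a (hT.2 ⟨c1, c3, h⟩)
        · exact b (hT'.2 ⟨c2'.le, c4.le, h⟩)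
      rw [if_neg a, if_neg b, if_neg c, add_zero]

lemma isClosed_reflection (T : (ℤ × ℤ) × (ℤ × ℤ) × (ℤ × ℤ)) (m : ℝ × ℝ) :
    IsClosed ((fun x => m - x) ⁻¹' tri T) :=
  (tri_isClosed T).preimage (by fun_prop)

lemma convex_reflection (T : (ℤ × ℤ) × (ℤ × ℤ) × (ℤ × ℤ)) (m : ℝ × ℝ) :
    Convex ℝ ((fun x => m - x) ⁻¹' tri T) := by
  have := (tri_convex T).affine_preimage
    (AffineMap.const ℝ (ℝ × ℝ) m - AffineMap.id ℝ (ℝ × ℝ))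
  exact this

lemma volume_reflection (A : Set (ℝ × ℝ)) (m : ℝ × ℝ) :
    volume ((fun x => m - x) ⁻¹' A) = volume A :=
  (Measure.measurePreserving_sub_left volume m).measure_preimage_emb
    (MeasurableEquiv.subLeft m).measurableEmbedding A

lemma latticeCount_tri_add_reflection {T : (ℤ × ℤ) × (ℤ × ℤ) × (ℤ × ℤ)}
    (h : AffineIndependent ℝ ![c2 T.1, c2 T.2.1, c2 T.2.2]) :
    ∀ᵐ w : ℝ × ℝ, latticeCount (tri T) w
      + latticeCount ((fun x => c2 (T.2.1 + T.2.2) - x) ⁻¹' tri T) w = 2 * volume (tri T) := by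
  obtain ⟨f, g, hfu, hfv, hgu, hgv, hx⟩ := exists_edge_coords h
  set D := {x | ⌊f (x - c2 T.1)⌋ = 0 ∧ ⌊g (x - c2 T.1)⌋ = 0}
  have hae : ∀ᵐ w : ℝ × ℝ, latticeCount (tri T) w
      + latticeCount ((fun x => c2 (T.2.1 + T.2.2) - x) ⁻¹' tri T) w = latticeCount D 0 := by
    have hf0 : f ≠ 0 := by rintro rfl; simp at hfu
    have hg0 : g ≠ 0 := by rintro rfl; simp at hgv
    have hfg0 : f + g ≠ 0 := by
      intro h0
      have := congrArg (fun k : (ℝ × ℝ) →L[ℝ] ℝ => k (c2 (T.2.1 - T.1))) h0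
      simp [hfu, hgu] at this
    have key : ∀ k : (ℝ × ℝ) →L[ℝ] ℝ, k ≠ 0 → ∀ c : ℝ,
        ∀ᵐ w : ℝ × ℝ, ∀ i : ℤ × ℤ, k (w + c2 i) ≠ c := by
      intro k hk c
      rw [ae_all_iff]
      intro i
      have h0 := volume_setOf_eq_const hk (c - k (c2 i))
      rw [ae_iff]
      convert h0 using 3 with w
      simp [eq_sub_iff_add_eq]
    filter_upwards [key f hf0 (1 + f (c2 T.1)), key g hg0 (1 + g (c2 T.1)),
      key (f + g) hfg0 (1 + (f + g) (c2 T.1))] with w h1 h2 h3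
    rw [latticeCount_parallelogram_const hfu hfv hgu hgv (c2 T.1) 0 w]
    unfold latticeCount
    rw [← ENNReal.tsum_add]
    exact tsum_congr fun i =>
      indicator_tri_add_indicator_reflection hfu hfv hgu hgv hx (h1 i) (h2 i) (h3 i)
  have hT := (tri_isClosed T).measurableSet
  have hT' := (isClosed_reflection T (c2 (T.2.1 + T.2.2))).measurableSet
  have hI := setLIntegral_latticeCount_unit hT
  have hI' := setLIntegral_latticeCount_unit hT'
  have hU : volume (Set.Ico (0:ℝ) 1 ×ˢ Set.Ico (0:ℝ) 1) = 1 := by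
    rw [Measure.volume_eq_prod, Measure.prod_prod]; simp
  have hc : latticeCount D 0 = 2 * volume (tri T) := by
    have hmeas : Measurable (latticeCount (tri T)) :=
      Measurable.tsum fun i => (measurable_one.indicator hT).comp (measurable_add_const _)
    calc latticeCount D 0
        = ∫⁻ _ in (Set.Ico (0:ℝ) 1 ×ˢ Set.Ico (0:ℝ) 1), latticeCount D 0 := by
          rw [setLIntegral_const, hU, mul_one]
      _ = ∫⁻ w in (Set.Ico (0:ℝ) 1 ×ˢ Set.Ico (0:ℝ) 1), (latticeCount (tri T) w
          + latticeCount ((fun x => c2 (T.2.1 + T.2.2) - x) ⁻¹' tri T) w) :=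
          lintegral_congr_ae (ae_restrict_of_ae (hae.mono fun w hw => hw.symm))
      _ = 2 * volume (tri T) := by
          rw [lintegral_add_left hmeas, hI, hI', volume_reflection, two_mul]
  rw [← hc]
  exact hae

lemma tsum_volume_inter_ball {T : (ℤ × ℤ) × (ℤ × ℤ) × (ℤ × ℤ)}
    (h : AffineIndependent ℝ ![c2 T.1, c2 T.2.1, c2 T.2.2]) (z : ℝ × ℝ) (ρ : ℝ) :
    ∑' i : ℤ × ℤ, (volume (tri T ∩ Metric.ball (z + c2 i) ρ) +
      volume ((fun x => c2 (T.2.1 + T.2.2) - x) ⁻¹' tri T ∩ Metric.ball (z + c2 i) ρ))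
      = 2 * volume (tri T) * volume (Metric.ball z ρ) := by
  have hT := (tri_isClosed T).measurableSet
  have hT' := (isClosed_reflection T (c2 (T.2.1 + T.2.2))).measurableSet
  have key : ∀ A : Set (ℝ × ℝ), MeasurableSet A →
      ∑' i : ℤ × ℤ, volume (A ∩ Metric.ball (z + c2 i) ρ)
        = ∫⁻ w in Metric.ball z ρ, latticeCount A w := by
    intro A hA
    rw [setLIntegral_latticeCount hA]
    refine tsum_congr fun i => ?_
    rw [volume_preimage_add_inter]
    congr 2
    ext w
    simp only [Metric.mem_ball, Set.mem_preimage, dist_eq_norm]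
    rw [sub_add_eq_sub_sub_swap]
  have hmeas : Measurable (latticeCount (tri T)) :=
    Measurable.tsum fun i => (measurable_one.indicator hT).comp (measurable_add_const _)
  rw [ENNReal.tsum_add, key _ hT, key _ hT', ← lintegral_add_left hmeas,
    lintegral_congr_ae (ae_restrict_of_ae (latticeCount_tri_add_reflection h)), setLIntegral_const]

lemma sum_dens_add_dens_reflection {T : (ℤ × ℤ) × (ℤ × ℤ) × (ℤ × ℤ)}
    (h : AffineIndependent ℝ ![c2 T.1, c2 T.2.1, c2 T.2.2]) (z : ℝ × ℝ) (J : Finset (ℤ × ℤ))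
    (hJ : ∀ i ∉ J, tri T ∩ Metric.ball (z + c2 i) 1 = ∅ ∧
      (fun x => c2 (T.2.1 + T.2.2) - x) ⁻¹' tri T ∩ Metric.ball (z + c2 i) 1 = ∅) :
    ∑ i ∈ J, (dens (tri T) (z + c2 i) +
      dens ((fun x => c2 (T.2.1 + T.2.2) - x) ⁻¹' tri T) (z + c2 i))
      = 2 * (volume (tri T)).toReal := by
  have hlim := tendsto_finsetSum J fun i _ =>
    (volFrac_tendsto_dens (tri_isClosed T) (tri_convex T) (z + c2 i)).add
    (volFrac_tendsto_dens (isClosed_reflection T (c2 (T.2.1 + T.2.2)))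
      (convex_reflection T (c2 (T.2.1 + T.2.2))) (z + c2 i))
  refine tendsto_nhds_unique hlim (tendsto_const_nhds.congr' ?_)
  filter_upwards [Ioo_mem_nhdsGT (zero_lt_one' ℝ)] with ρ hρ
  have hs := tsum_volume_inter_ball h z ρ
  rw [tsum_eq_sum (s := J)] at hs
  · have hpos : 0 < (volume (Metric.ball z ρ)).toReal :=
      ENNReal.toReal_pos (Metric.measure_ball_pos _ _ hρ.1).ne' measure_ball_lt_top.ne
    have hs' := congrArg ENNReal.toReal hs
    rw [ENNReal.toReal_sum fun i _ => ENNReal.add_ne_top.2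
      ⟨volume_inter_ball_ne_top _ _ _, volume_inter_ball_ne_top _ _ _⟩] at hs'
    rw [ENNReal.toReal_mul, ENNReal.toReal_mul, ENNReal.toReal_ofNat] at hs'
    rw [eq_comm, ← eq_div_iff hpos.ne'] at hs'
    rw [hs', Finset.sum_div]
    refine Finset.sum_congr rfl fun i _ => ?_
    rw [ENNReal.toReal_add (volume_inter_ball_ne_top _ _ _) (volume_inter_ball_ne_top _ _ _)]
    unfold volFrac
    rw [Measure.addHaar_ball_center volume z, Measure.addHaar_ball_center volume (z + c2 i), add_div]
  · intro i hi
    have hsub := Metric.ball_subset_ball (x := z + c2 i) hρ.2.le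
    obtain ⟨h1, h2⟩ := hJ i hi
    rw [Set.subset_empty_iff.1 ((Set.inter_subset_inter_right _ hsub).trans h1.subset),
      Set.subset_empty_iff.1 ((Set.inter_subset_inter_right _ hsub).trans h2.subset)]
    simp

lemma dens_reflection (A : Set (ℝ × ℝ)) (m x : ℝ × ℝ) :
    dens ((fun x => m - x) ⁻¹' A) x = dens A (m - x) := by
  unfold dens
  congr 1
  ext ρ
  rw [← volume_reflection (A ∩ _) m,
    Measure.addHaar_ball_center volume x, Measure.addHaar_ball_center volume (m - x)]
  congr 3
  rw [Set.preimage_inter]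
  congr 1
  ext w
  simp only [Metric.mem_ball, Set.mem_preimage, dist_sub_left]

/-- The averaged density of `A` along the bond `(i, i + r)`. -/
noncomputable def bondDens (A : Set (ℝ × ℝ)) (r i : ℤ × ℤ) : ℝ :=
  ∫ l in (0:ℝ)..1, dens A (c2 i + l • c2 r)

lemma bondDens_reflection (A : Set (ℝ × ℝ)) (m r i : ℤ × ℤ) :
    bondDens ((fun x => c2 m - x) ⁻¹' A) r i = bondDens A r (m - r - i) := by
  unfold bondDens
  have := intervalIntegral.integral_comp_sub_left (a := 0) (b := 1)
    (fun l : ℝ => dens A (c2 (m - r - i) + l • c2 r)) 1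
  simp only [sub_self, sub_zero] at this
  rw [← this]
  refine intervalIntegral.integral_congr fun l _ => ?_
  simp only [dens_reflection, c2_sub]
  congr 1
  module

/-- The bond-density lemma. -/
lemma tsum_bondDens {T : (ℤ × ℤ) × (ℤ × ℤ) × (ℤ × ℤ)}
    (h : AffineIndependent ℝ ![c2 T.1, c2 T.2.1, c2 T.2.2]) (r : ℤ × ℤ) :
    ∑' i, bondDens (tri T) r i = (volume (tri T)).toReal := by
  set m := T.2.1 + T.2.2 with hm
  set T' := (fun x => c2 m - x) ⁻¹' tri T with hT'
  obtain ⟨M, hM⟩ := (tri_isCompact T).isBounded.exists_norm_le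
  obtain ⟨N, hN⟩ := exists_nat_ge (M + ‖c2 m‖ + ‖c2 r‖ + 1)
  let J : Finset (ℤ × ℤ) := Finset.Icc (-(N:ℤ), -(N:ℤ)) ((N:ℤ), (N:ℤ))
  have hJnorm : ∀ i ∉ J, M + ‖c2 m‖ + ‖c2 r‖ + 1 < ‖c2 i‖ := by
    intro i hi
    by_contra! hle
    apply hi
    have hle' := hle.trans hN
    rw [c2, Prod.norm_def, max_le_iff, Real.norm_eq_abs, Real.norm_eq_abs, abs_le, abs_le] at hle'
    dsimp only at hle'
    simp only [J, Finset.mem_Icc, Prod.le_def]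
    obtain ⟨⟨h1, h2⟩, h3, h4⟩ := hle'
    exact ⟨⟨by exact_mod_cast h1, by exact_mod_cast h3⟩, by exact_mod_cast h2, by exact_mod_cast h4⟩
  have hfar : ∀ l ∈ Set.Icc (0:ℝ) 1, ∀ i ∉ J,
      tri T ∩ Metric.ball (l • c2 r + c2 i) 1 = ∅ ∧ T' ∩ Metric.ball (l • c2 r + c2 i) 1 = ∅ := by
    intro l hl i hi
    have hlr : ‖l • c2 r‖ ≤ ‖c2 r‖ := by
      rw [norm_smul, Real.norm_of_nonneg hl.1]
      exact mul_le_of_le_one_left (norm_nonneg _) hl.2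
    have key : ∀ w, ‖w‖ ≤ M + ‖c2 m‖ → w ∉ Metric.ball (l • c2 r + c2 i) 1 := by
      intro w hw hwb
      rw [mem_ball_iff_norm] at hwb
      have h1 : ‖c2 i‖ ≤ ‖w‖ + ‖l • c2 r‖ + ‖w - (l • c2 r + c2 i)‖ := by
        have := norm_sub_le (w - l • c2 r) (w - (l • c2 r + c2 i))
        have h2 := norm_sub_le w (l • c2 r)
        rw [show w - l • c2 r - (w - (l • c2 r + c2 i)) = c2 i by abel] at this
        linarith
      linarith [hJnorm i hi]
    constructor <;> ext w <;>
      simp only [Set.mem_inter_iff, Set.mem_empty_iff_false, iff_false, not_and] <;> intro hw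
    · exact key w (by linarith [hM w hw, norm_nonneg (c2 m)])
    · refine key w ?_
      have h1 := hM _ hw
      have h2 := norm_sub_le (c2 m) (c2 m - w)
      rw [sub_sub_cancel] at h2
      linarith
  have hzero : ∀ A : Set (ℝ × ℝ), IsClosed A →
      (∀ l ∈ Set.Icc (0:ℝ) 1, ∀ i ∉ J, A ∩ Metric.ball (l • c2 r + c2 i) 1 = ∅) →
      ∀ i ∉ J, bondDens A r i = 0 := by
    intro A hA hdis i hi
    refine intervalIntegral.integral_zero_ae (Eventually.of_forall fun l hl => ?_)
    rw [Set.uIoc_of_le zero_le_one] at hl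
    refine dens_eq_zero_of_notMem hA fun hmem => ?_
    have := hdis l ⟨hl.1.le, hl.2⟩ i hi
    rw [add_comm] at hmem
    exact Set.eq_empty_iff_forall_notMem.1 this _ ⟨hmem, Metric.mem_ball_self one_pos⟩
  have hcl := tri_isClosed T
  have hcl' := isClosed_reflection T (c2 m)
  have hsum : ∑ i ∈ J, (bondDens (tri T) r i + bondDens T' r i)
      = 2 * (volume (tri T)).toReal := by
    have hint := fun i : ℤ × ℤ =>
      intervalIntegrable_dens hcl (tri_convex T) (c2 i) (c2 r) 0 1
    have hint' := fun i : ℤ × ℤ =>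
      intervalIntegrable_dens hcl' (convex_reflection T (c2 m)) (c2 i) (c2 r) 0 1
    unfold bondDens
    calc _ = ∑ i ∈ J, ∫ l in (0:ℝ)..1, (dens (tri T) (c2 i + l • c2 r) +
            dens T' (c2 i + l • c2 r)) :=
          Finset.sum_congr rfl fun i _ =>
            (intervalIntegral.integral_add (hint i) (hint' i)).symm
      _ = ∫ l in (0:ℝ)..1, ∑ i ∈ J, (dens (tri T) (c2 i + l • c2 r) +
            dens T' (c2 i + l • c2 r)) :=
          (intervalIntegral.integral_finsetSum fun i _ => (hint i).add (hint' i)).symm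
      _ = ∫ l in (0:ℝ)..1, 2 * (volume (tri T)).toReal := by
          refine intervalIntegral.integral_congr fun l hl => ?_
          rw [Set.uIcc_of_le zero_le_one] at hl
          simp only [add_comm (c2 _) (l • c2 r)]
          exact sum_dens_add_dens_reflection h _ J (hfar l hl)
      _ = _ := by simp
  have e1 : ∑' i, bondDens (tri T) r i = ∑ i ∈ J, bondDens (tri T) r i :=
    tsum_eq_sum (hzero _ hcl fun l hl i hi => (hfar l hl i hi).1)
  have e2 : ∑' i, bondDens T' r i = ∑ i ∈ J, bondDens T' r i :=
    tsum_eq_sum (hzero _ hcl' fun l hl i hi => (hfar l hl i hi).2)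
  have e3 : ∑' i, bondDens T' r i = ∑' i, bondDens (tri T) r i := by
    simp only [hT', bondDens_reflection]
    exact (Equiv.subLeft (m - r)).tsum_eq (bondDens (tri T) r)
  rw [Finset.sum_add_distrib, ← e1, ← e2, e3] at hsum
  linarith

lemma Dr_eq_of_eventually_mem {S : Set (ℝ × ℝ)} {y : ℝ × ℝ → ℝ × ℝ}
    {A : (ℝ × ℝ) →ₗ[ℝ] (ℝ × ℝ)} {c : ℝ × ℝ} (hA : ∀ x ∈ S, y x = A x + c) {x r : ℝ × ℝ}
    (hx : x ∈ S) (hS : ∀ᶠ s : ℝ in nhdsWithin 0 (Set.Ioi 0), x + s • r ∈ S) :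
    Dr r y x = A r := by
  have h1 : HasDerivWithinAt (fun s : ℝ => A x + c + s • A r) (A r) (Set.Ioi 0) 0 := by
    simpa using ((hasDerivAt_id (0 : ℝ)).smul_const (A r)).hasDerivWithinAt.const_add (A x + c)
  have h2 : HasDerivWithinAt (fun s : ℝ => y (x + s • r)) (A r) (Set.Ioi 0) 0 := by
    refine h1.congr_of_eventuallyEq ?_ ?_
    · filter_upwards [hS] with s hs
      rw [hA _ hs, map_add, map_smul]
      abel
    · simp [hA x hx]
  exact h2.derivWithin (uniqueDiffWithinAt_Ioi 0)

lemma eq_of_Dr_eq_on_interior {T : (ℤ × ℤ) × (ℤ × ℤ) × (ℤ × ℤ)}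
    (h : AffineIndependent ℝ ![c2 T.1, c2 T.2.1, c2 T.2.2]) {y : ℝ × ℝ → ℝ × ℝ}
    {A : (ℝ × ℝ) →ₗ[ℝ] (ℝ × ℝ)} {c r v : ℝ × ℝ} (hA : ∀ x ∈ tri T, y x = A x + c)
    (hv : ∀ x ∈ interior (tri T), Dr r y x = v) : v = A r := by
  have hne : (interior (tri T)).Nonempty := by
    have hr : Set.range ![c2 T.1, c2 T.2.1, c2 T.2.2] = {c2 T.1, c2 T.2.1, c2 T.2.2} := by
      rw [Matrix.range_cons, Matrix.range_cons_cons_empty, Set.singleton_union]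
    rw [tri, interior_convexHull_nonempty_iff_affineSpan_eq_top, ← hr]
    exact h.affineSpan_eq_top_iff_card_eq_finrank_add_one.2 (by simp)
  obtain ⟨x, hx⟩ := hne
  rw [← hv x hx]
  refine Dr_eq_of_eventually_mem hA (interior_subset hx) ?_
  have hcont : Tendsto (fun s : ℝ => x + s • r) (nhdsWithin 0 (Set.Ioi 0)) (nhds x) := by
    have : Continuous fun s : ℝ => x + s • r := by fun_prop
    simpa using (this.tendsto 0).mono_left nhdsWithin_le_nhds
  exact hcont.eventually (mem_interior_iff_mem_nhds.1 hx)

lemma ae_dens_ne_zero_imp_Dr_eq {T : (ℤ × ℤ) × (ℤ × ℤ) × (ℤ × ℤ)} {y : ℝ × ℝ → ℝ × ℝ}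
    {A : (ℝ × ℝ) →ₗ[ℝ] (ℝ × ℝ)} {c : ℝ × ℝ} (hA : ∀ x ∈ tri T, y x = A x + c)
    (p r : ℝ × ℝ) :
    ∀ᵐ l : ℝ, dens (tri T) (p + l • r) ≠ 0 → Dr r y (p + l • r) = A r := by
  set S : Set ℝ := (fun l : ℝ => p + l • r) ⁻¹' tri T with hS
  have hconv : Convex ℝ S := by
    intro l₁ h₁ l₂ h₂ a b ha hb hab
    have := tri_convex T h₁ h₂ ha hb hab
    rw [smul_add, smul_add, add_add_add_comm, ← add_smul, hab, one_smul, smul_smul, smul_smul,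
      ← add_smul] at this
    exact this
  have hae : interior S =ᵐ[volume] S :=
    interior_ae_eq_of_null_frontier (hconv.addHaar_frontier volume)
  filter_upwards [hae.mem_iff] with l hl h0
  have hmem : p + l • r ∈ tri T := by
    by_contra h
    exact h0 (dens_eq_zero_of_notMem (tri_isClosed T) h)
  refine Dr_eq_of_eventually_mem hA hmem ?_
  have hnhds : S ∈ nhds l := mem_interior_iff_mem_nhds.1 (hl.2 hmem)
  have hcont : Tendsto (fun s : ℝ => l + s) (nhdsWithin 0 (Set.Ioi 0)) (nhds l) := by
    have : Continuous fun s : ℝ => l + s := by fun_prop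
    simpa using (this.tendsto 0).mono_left nhdsWithin_le_nhds
  filter_upwards [hcont.eventually hnhds] with s hs
  rw [add_assoc, ← add_smul]
  exact hs

/-- Effective-area form of the 2D ECC method:
`∑_{b∈B, b⊂Ω_c} c_b(y) = ∑_{T∈𝒯} ∑_{r∈R} Ω_{T,r} φ(D_r y|_T)` with
`Ω_{T,r} = |T| − ∑_{(i,i+r)∈B, (i,i+r)⊄Ω_c} ⨍_{(i,i+r)} χ_T db`; consequently
`E^ecc(y) = ∑_{b∈B, b⊄Ω_c} e_b(y) + ∑_{T∈𝒯} ∑_{r∈R} Ω_{T,r} φ(D_r y|_T)`.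
Here `G T r` denotes the (constant) value of `D_r y` on the triangle `T`. -/
theorem ecc_effective_area_2d
    (I : Finset (ℤ × ℤ)) (R : Finset (ℤ × ℤ)) (hR0 : (0 : ℤ × ℤ) ∉ R)
    (𝒯 : Finset ((ℤ × ℤ) × (ℤ × ℤ) × (ℤ × ℤ)))
    (Ωc : Set (ℝ × ℝ)) (hΩc : Ωc = ⋃ T ∈ 𝒯, tri T)
    (hnd : ∀ T ∈ 𝒯, AffineIndependent ℝ ![c2 T.1, c2 T.2.1, c2 T.2.2])
    (hdisj : ∀ T ∈ 𝒯, ∀ T' ∈ 𝒯, T ≠ T' → interior (tri T) ∩ interior (tri T') = ∅)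
    (y : ℝ × ℝ → ℝ × ℝ) (hy : Continuous y)
    (haff : ∀ T ∈ 𝒯, ∃ A : (ℝ × ℝ) →ₗ[ℝ] (ℝ × ℝ), ∃ c : ℝ × ℝ, ∀ x ∈ tri T, y x = A x + c)
    (φ : ℝ × ℝ → ℝ) (hφ : Continuous φ)
    (G : ((ℤ × ℤ) × (ℤ × ℤ) × (ℤ × ℤ)) → (ℤ × ℤ) → ℝ × ℝ)
    (hG : ∀ T ∈ 𝒯, ∀ r ∈ R, ∀ x ∈ interior (tri T), Dr (c2 r) y x = G T r)
    (hbonds : ∀ r ∈ R, ∀ i : ℤ × ℤ,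
      (segment ℝ (c2 i) (c2 (i + r)) ∩ closure Ωc).Nonempty → i ∈ I ∧ i + r ∈ I) :
    (∑ p ∈ ((I ×ˢ R).filter (fun p => p.1 + p.2 ∈ I)).filter
        (fun p => openSegment ℝ (c2 p.1) (c2 (p.1 + p.2)) ⊆ Ωc),
        ∫ l in (0:ℝ)..1,
          dens Ωc (c2 p.1 + l • c2 p.2) * φ (Dr (c2 p.2) y (c2 p.1 + l • c2 p.2)))
      = (∑ T ∈ 𝒯, ∑ r ∈ R,
          ((volume (tri T)).toReal
            - ∑ p ∈ ((I ×ˢ R).filter (fun p => p.1 + p.2 ∈ I)).filter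
                (fun p => p.2 = r ∧ ¬ openSegment ℝ (c2 p.1) (c2 (p.1 + p.2)) ⊆ Ωc),
                ∫ l in (0:ℝ)..1, dens (tri T) (c2 p.1 + l • c2 p.2))
            * φ (G T r))
    ∧ (∑ p ∈ ((I ×ˢ R).filter (fun p => p.1 + p.2 ∈ I)).filter
          (fun p => ¬ openSegment ℝ (c2 p.1) (c2 (p.1 + p.2)) ⊆ Ωc),
          φ (y (c2 (p.1 + p.2)) - y (c2 p.1)))
        + (∑ T ∈ 𝒯, ∑ r ∈ R,
            ((volume (tri T)).toReal
              - ∑ p ∈ ((I ×ˢ R).filter (fun p => p.1 + p.2 ∈ I)).filter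
                  (fun p => p.2 = r ∧ ¬ openSegment ℝ (c2 p.1) (c2 (p.1 + p.2)) ⊆ Ωc),
                  ∫ l in (0:ℝ)..1, dens (tri T) (c2 p.1 + l • c2 p.2))
              * φ (G T r))
      = (∑ p ∈ ((I ×ˢ R).filter (fun p => p.1 + p.2 ∈ I)).filter
            (fun p => ¬ openSegment ℝ (c2 p.1) (c2 (p.1 + p.2)) ⊆ Ωc),
            φ (y (c2 (p.1 + p.2)) - y (c2 p.1)))
        + (∑ p ∈ ((I ×ˢ R).filter (fun p => p.1 + p.2 ∈ I)).filter
            (fun p => openSegment ℝ (c2 p.1) (c2 (p.1 + p.2)) ⊆ Ωc),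
            ∫ l in (0:ℝ)..1,
              dens Ωc (c2 p.1 + l • c2 p.2) * φ (Dr (c2 p.2) y (c2 p.1 + l • c2 p.2))) := by
  have hcl : ∀ T ∈ 𝒯, IsClosed (tri T) := fun T _ => tri_isClosed T
  have hcv : ∀ T ∈ 𝒯, Convex ℝ (tri T) := fun T _ => tri_convex T
  set B := (I ×ˢ R).filter (fun p => p.1 + p.2 ∈ I) with hB
  have hBR : ∀ p ∈ B, p.2 ∈ R := fun p hp =>
    (Finset.mem_product.1 (Finset.mem_filter.1 hp).1).2
  have hbond : ∀ p ∈ B, (∫ l in (0:ℝ)..1,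
      dens Ωc (c2 p.1 + l • c2 p.2) * φ (Dr (c2 p.2) y (c2 p.1 + l • c2 p.2)))
        = ∑ T ∈ 𝒯, bondDens (tri T) p.2 p.1 * φ (G T p.2) := by
    intro p hp
    have hae : ∀ᵐ l : ℝ, ∀ T ∈ 𝒯,
        dens (tri T) (c2 p.1 + l • c2 p.2) * φ (Dr (c2 p.2) y (c2 p.1 + l • c2 p.2))
          = dens (tri T) (c2 p.1 + l • c2 p.2) * φ (G T p.2) := by
      refine (ae_ball_iff 𝒯.countable_toSet).2 fun T hT => ?_
      obtain ⟨A, c, hA⟩ := haff T hT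
      have hGT := eq_of_Dr_eq_on_interior (hnd T hT) hA (hG T hT p.2 (hBR p hp))
      filter_upwards [ae_dens_ne_zero_imp_Dr_eq hA (c2 p.1) (c2 p.2)] with l hl
      by_cases h0 : dens (tri T) (c2 p.1 + l • c2 p.2) = 0
      · rw [h0, zero_mul, zero_mul]
      · rw [hl h0, hGT]
    calc _ = ∫ l in (0:ℝ)..1, ∑ T ∈ 𝒯, dens (tri T) (c2 p.1 + l • c2 p.2) * φ (G T p.2) := by
          refine intervalIntegral.integral_congr_ae (hae.mono fun l hl _ => ?_)
          rw [hΩc, dens_biUnion 𝒯 tri hcl hcv hdisj, Finset.sum_mul]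
          exact Finset.sum_congr rfl hl
      _ = ∑ T ∈ 𝒯, ∫ l in (0:ℝ)..1, dens (tri T) (c2 p.1 + l • c2 p.2) * φ (G T p.2) :=
          intervalIntegral.integral_finsetSum fun T hT =>
            (intervalIntegrable_dens (hcl T hT) (hcv T hT) _ _ _ _).mul_const _
      _ = _ := Finset.sum_congr rfl fun T _ => intervalIntegral.integral_mul_const _ _
  have hvol : ∀ T ∈ 𝒯, ∀ r ∈ R,
      (volume (tri T)).toReal = ∑ p ∈ B.filter (fun p => p.2 = r), bondDens (tri T) p.2 p.1 := by
    intro T hT r hr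
    rw [← tsum_bondDens (hnd T hT) r, tsum_eq_sum (s := I.filter (fun i => i + r ∈ I))]
    · refine Finset.sum_bij' (fun i _ => (i, r)) (fun p _ => p.1) ?_ ?_ ?_ ?_ ?_
      · intro i hi
        simp only [hB, Finset.mem_filter, Finset.mem_product] at hi ⊢
        exact ⟨⟨⟨hi.1, hr⟩, hi.2⟩, trivial⟩
      · rintro ⟨i, r'⟩ hp
        simp only [hB, Finset.mem_filter, Finset.mem_product] at hp ⊢
        obtain ⟨⟨⟨h1, -⟩, h2⟩, rfl⟩ := hp
        exact ⟨h1, h2⟩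
      · exact fun i _ => rfl
      · rintro ⟨i, r'⟩ hp
        exact Prod.ext rfl (Finset.mem_filter.1 hp).2.symm
      · exact fun i _ => rfl
    · intro i hi
      refine intervalIntegral.integral_zero_ae (Eventually.of_forall fun l hl => ?_)
      rw [Set.uIoc_of_le zero_le_one] at hl
      refine dens_eq_zero_of_notMem (hcl T hT) fun hmem => hi ?_
      rw [Finset.mem_filter]
      refine hbonds r hr i ⟨c2 i + l • c2 r, ?_, subset_closure ?_⟩
      · rw [segment_eq_image']
        exact ⟨l, ⟨hl.1.le, hl.2⟩, by simp [c2_add]⟩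
      · rw [hΩc]
        exact Set.mem_biUnion hT hmem
  clear_value B
  have main : (∑ p ∈ B.filter (fun p => openSegment ℝ (c2 p.1) (c2 (p.1 + p.2)) ⊆ Ωc),
        ∫ l in (0:ℝ)..1,
          dens Ωc (c2 p.1 + l • c2 p.2) * φ (Dr (c2 p.2) y (c2 p.1 + l • c2 p.2)))
      = (∑ T ∈ 𝒯, ∑ r ∈ R,
          ((volume (tri T)).toReal
            - ∑ p ∈ B.filter
                (fun p => p.2 = r ∧ ¬ openSegment ℝ (c2 p.1) (c2 (p.1 + p.2)) ⊆ Ωc),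
                bondDens (tri T) p.2 p.1)
            * φ (G T r)) := by
    rw [Finset.sum_congr rfl fun p hp => hbond p (Finset.mem_filter.1 hp).1, Finset.sum_comm]
    refine Finset.sum_congr rfl fun T hT => ?_
    rw [← Finset.sum_fiberwise_of_maps_to (g := Prod.snd) (t := R) fun p hp =>
      hBR p (Finset.mem_filter.1 hp).1]
    refine Finset.sum_congr rfl fun r hr => ?_
    rw [hvol T hT r hr, ← Finset.sum_filter_add_sum_filter_not (B.filter (fun p => p.2 = r))
      (fun p => openSegment ℝ (c2 p.1) (c2 (p.1 + p.2)) ⊆ Ωc), Finset.filter_filter,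
      Finset.filter_filter, Finset.filter_filter]
    rw [add_sub_cancel_right, Finset.sum_mul]
    refine Finset.sum_congr ?_ fun p hp => ?_
    · ext p
      simp only [Finset.mem_filter]
      tauto
    · rw [(Finset.mem_filter.1 hp).2.1]
  unfold bondDens at main
  exact ⟨main, by rw [main]⟩
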